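/- Let ρ : ℝ^d → (0,∞) and suppose there exist constants C > 0 and N₀ ≥ 1 such that for all x, y ∈ ℝ^d, C⁻¹ (1 + |x−y|/ρ(x))^{−N₀} ≤ ρ(y)/ρ(x) ≤ C (1 + |x−y|/ρ(x))^{N₀/(N₀+1)}. Then there exists a constant C' > 0 such that for every x ∈ ℝ^d, r > 0, every y with |y − x| < r, and every positive integer k, one has 1 + 2^k r/ρ(y) ≥ C' (1 + r/ρ(x))^{−N₀/(N₀+1)} (1 + 2^k r/ρ(x)). -/

import Mathlib

open MeasureTheory Metric Real

noncomputable section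

/-!
With `M = max 1 C * (1 + r / ρ x) ^ θ`, the upper comparison estimate gives `ρ y / ρ x ≤ M`, hence
`t / ρ x = ρ y / ρ x * (t / ρ y) ≤ M * (t / ρ y)` for every `t ≥ 0`. Taking `max 1 C` instead of
`C` makes `1 ≤ M`, so that `M` also absorbs the summand `1` in `1 + t / ρ x`.
-/

theorem one_add_div_le_mul_one_add_div {K : Type*} [Field K] [LinearOrder K] [IsStrictOrderedRing K]
    {a b t M : K} (hb : 0 < b) (ht : 0 ≤ t) (hM : 1 ≤ M) (hba : b / a ≤ M) :
    1 + t / a ≤ M * (1 + t / b) :=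
  calc 1 + t / a = 1 + b / a * (t / b) := by field_simp
    _ ≤ M + M * (t / b) := by gcongr
    _ = M * (1 + t / b) := by ring

theorem mul_rpow_le_max_one_mul_rpow {C θ u v : ℝ} (hθ : 0 ≤ θ) (hu : 0 ≤ u) (huv : u ≤ v) :
    C * u ^ θ ≤ max 1 C * v ^ θ :=
  mul_le_mul (le_max_right 1 C) (rpow_le_rpow hu huv hθ) (rpow_nonneg hu θ) (by positivity)

theorem stmt0_general {X : Type*} [PseudoMetricSpace X] {ρ : X → ℝ} (hρ : ∀ x, 0 < ρ x)
    {C θ : ℝ} (hθ : 0 ≤ θ) (hupper : ∀ x y, ρ y / ρ x ≤ C * (1 + dist x y / ρ x) ^ θ)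
    {x y : X} {r t : ℝ} (hyx : dist y x ≤ r) (ht : 0 ≤ t) :
    (max 1 C)⁻¹ * (1 + r / ρ x) ^ (-θ) * (1 + t / ρ x) ≤ 1 + t / ρ y := by
  have hx := hρ x
  have hr : 0 ≤ r := dist_nonneg.trans hyx
  have hbase : 1 ≤ 1 + r / ρ x := le_add_of_nonneg_right (by positivity)
  have one_le_factor : 1 ≤ max 1 C * (1 + r / ρ x) ^ θ :=
    one_le_mul_of_one_le_of_one_le (le_max_left 1 C) (one_le_rpow hbase hθ)
  have ratio_le_factor : ρ y / ρ x ≤ max 1 C * (1 + r / ρ x) ^ θ := by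
    refine (hupper x y).trans (mul_rpow_le_max_one_mul_rpow hθ (by positivity) ?_)
    rw [dist_comm]
    gcongr
  rw [rpow_neg (by positivity), ← mul_inv, inv_mul_le_iff₀ (by positivity)]
  exact one_add_div_le_mul_one_add_div (hρ y) ht one_le_factor ratio_le_factor

theorem stmt0 (d : ℕ) (ρ : EuclideanSpace ℝ (Fin d) → ℝ)
    (hρ : ∀ x, 0 < ρ x) (C N₀ : ℝ) (hC : 0 < C) (hN₀ : 1 ≤ N₀)
    (hcomp : ∀ x y, C⁻¹ * (1 + dist x y / ρ x) ^ (-N₀) ≤ ρ y / ρ x ∧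
      ρ y / ρ x ≤ C * (1 + dist x y / ρ x) ^ (N₀ / (N₀ + 1))) :
    ∃ C' > (0:ℝ), ∀ (x : EuclideanSpace ℝ (Fin d)) (r : ℝ), 0 < r →
      ∀ y, dist y x < r → ∀ k : ℕ, 1 ≤ k →
        C' * (1 + r / ρ x) ^ (-(N₀ / (N₀ + 1))) * (1 + 2 ^ k * r / ρ x) ≤
          1 + 2 ^ k * r / ρ y :=
  ⟨(max 1 C)⁻¹, by positivity, fun _ _ _ _ hyx _ _ =>
    stmt0_general hρ (by positivity) (fun x y => (hcomp x y).2) hyx.le (by positivity)⟩
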